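/- As formal power series identities in infinitely many variables, Σ_{λ partition, λ' even} s_λ(x) = Π_{i<j} (1 − x_i x_j)^{−1}, where the sum is over partitions all of whose conjugate parts are even (i.e., all columns of λ have even length) and s_λ is the Schur function. -/

import Mathlib

open scoped ENNReal
open scoped Classical in
/-- Indicator of a proposition. -/
noncomputable def ind (P : Prop) : ℝ≥0∞ := if P then 1 else 0

theorem ind_true {P : Prop} (h : P) : ind P = 1 := if_pos h
theorem ind_false {P : Prop} (h : ¬ P) : ind P = 0 := if_neg h
theorem ind_ne {P : Prop} (h : ind P ≠ 0) : P := by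
  by_contra hP
  exact h (ind_false hP)
theorem ind_and (P Q : Prop) : ind (P ∧ Q) = ind P * ind Q := by
  by_cases hP : P <;> by_cases hQ : Q <;> simp [ind, hP, hQ]
theorem ind_congr {P Q : Prop} (h : P ↔ Q) : ind P = ind Q := by rw [propext h]

theorem tsum_bij {α β : Type*} (F : α → ℝ≥0∞) (G : β → ℝ≥0∞) (f : α → β) (g : β → α)
    (h1 : ∀ a, F a ≠ 0 → G (f a) = F a ∧ g (f a) = a)
    (h2 : ∀ b, G b ≠ 0 → F (g b) = G b ∧ f (g b) = b) :
    ∑' a, F a = ∑' b, G b := by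
  refine Equiv.tsum_eq_tsum_of_support (f := F) (g := G)
    { toFun := fun a => ⟨f a.1, by
        have := a.2
        simp only [Function.mem_support] at this ⊢
        rwa [(h1 _ this).1]⟩
      invFun := fun b => ⟨g b.1, by
        have := b.2
        simp only [Function.mem_support] at this ⊢
        rwa [(h2 _ this).1]⟩
      left_inv := fun a => Subtype.ext (h1 _ a.2).2
      right_inv := fun b => Subtype.ext (h2 _ b.2).2 } ?_
  intro a
  exact (h1 _ a.2).1

/-- `l / m` is a horizontal strip. -/
def HS (m l : YoungDiagram) : Prop :=
  ∀ i, m.rowLen i ≤ l.rowLen i ∧ l.rowLen (i + 1) ≤ m.rowLen i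

noncomputable def hs (m l : YoungDiagram) (p : ℕ) : ℝ≥0∞ := ind (HS m l ∧ l.card = m.card + p)

theorem yd_ext {a b : YoungDiagram} (h : ∀ i, a.rowLen i = b.rowLen i) : a = b := by
  ext ⟨i, j⟩
  rw [YoungDiagram.mem_cells, YoungDiagram.mem_cells, YoungDiagram.mem_iff_lt_rowLen,
    YoungDiagram.mem_iff_lt_rowLen, h]

theorem yd_exists (f : ℕ → ℕ) (hf : ∀ i, f (i + 1) ≤ f i) (N : ℕ) (hN : f N = 0) :
    ∃ D : YoungDiagram, ∀ i, D.rowLen i = f i := by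
  have ha : Antitone f := antitone_nat_of_succ_le hf
  let D : YoungDiagram :=
    { cells := (Finset.range N ×ˢ Finset.range (f 0)).filter (fun c => c.2 < f c.1)
      isLowerSet := by
        rintro ⟨a, b⟩ ⟨a', b'⟩ hle h
        obtain ⟨h3, h4⟩ := Prod.mk_le_mk.1 hle
        simp only [Finset.coe_filter, Finset.mem_product, Finset.mem_range, Set.mem_ofPred_eq]
          at h ⊢
        have := ha h3
        omega }
  have hD : ∀ i j, (i, j) ∈ D ↔ j < f i := by
    intro i j
    rw [← YoungDiagram.mem_cells]
    simp only [D, Finset.mem_filter, Finset.mem_product, Finset.mem_range]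
    constructor
    · exact fun h => h.2
    · intro h
      have h0 := ha (Nat.zero_le i)
      have : i < N := by
        by_contra hi
        have := ha (not_lt.1 hi)
        omega
      omega
  refine ⟨D, fun i => ?_⟩
  have h1 : ∀ j, j < D.rowLen i ↔ j < f i := fun j => by
    rw [← YoungDiagram.mem_iff_lt_rowLen, hD]
  have h2 := h1 (f i)
  have h3 := h1 (D.rowLen i)
  omega

theorem yd_zero (D : YoungDiagram) : ∃ N, ∀ i, N ≤ i → D.rowLen i = 0 := by
  refine ⟨D.colLen 0, fun i hi => ?_⟩
  by_contra h
  have : (i, 0) ∈ D := YoungDiagram.mem_iff_lt_rowLen.2 (Nat.pos_of_ne_zero h)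
  have := YoungDiagram.mem_iff_lt_colLen.1 this
  omega

theorem yd_card (D : YoungDiagram) (N : ℕ) (hN : D.rowLen N = 0) :
    D.card = ∑ i ∈ Finset.range N, D.rowLen i := by
  have : ∀ c ∈ D.cells, c.1 ∈ Finset.range N := by
    rintro ⟨i, j⟩ hc
    rw [YoungDiagram.mem_cells, YoungDiagram.mem_iff_lt_rowLen] at hc
    rw [Finset.mem_range]
    by_contra hi
    have := D.rowLen_anti _ _ (not_lt.1 hi)
    dsimp only at *
    omega
  rw [YoungDiagram.card, Finset.card_eq_sum_card_fiberwise this]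
  refine Finset.sum_congr rfl fun i _ => ?_
  rw [YoungDiagram.rowLen_eq_card]
  rfl

/-- The diagram with given row lengths. -/
noncomputable def ofRows (f : ℕ → ℕ) : YoungDiagram :=
  open scoped Classical in
  if h : ∃ D : YoungDiagram, ∀ i, D.rowLen i = f i then h.choose else ⊥

theorem rowLen_ofRows (f : ℕ → ℕ) (hf : ∀ i, f (i + 1) ≤ f i) (N : ℕ) (hN : f N = 0) (i : ℕ) :
    (ofRows f).rowLen i = f i := by
  have h := yd_exists f hf N hN
  rw [ofRows, dif_pos h]
  exact h.choose_spec i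

theorem HS.card_le {m l : YoungDiagram} (h : HS m l) : m.card ≤ l.card := by
  obtain ⟨N, hN⟩ := yd_zero l
  have h1 := hN N le_rfl
  have h2 := (h N).1
  rw [yd_card m N (by omega), yd_card l N h1]
  exact Finset.sum_le_sum fun i _ => (h i).1

/-- Even columns, in terms of rows. -/
def EvC (l : YoungDiagram) : Prop := ∀ i, l.rowLen (2 * i) = l.rowLen (2 * i + 1)

theorem evC_iff (l : YoungDiagram) : (∀ j, Even (l.colLen j)) ↔ EvC l := by
  have key : ∀ i j, j < l.rowLen i ↔ i < l.colLen j := fun i j => by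
    rw [← YoungDiagram.mem_iff_lt_rowLen, ← YoungDiagram.mem_iff_lt_colLen]
  constructor
  · intro h i
    have h1 := l.rowLen_anti (2 * i) (2 * i + 1) (by omega)
    obtain ⟨c, hc⟩ := h (l.rowLen (2 * i + 1))
    have h2 := key (2 * i) (l.rowLen (2 * i + 1))
    have h3 := key (2 * i + 1) (l.rowLen (2 * i + 1))
    omega
  · intro h j
    by_contra ho
    rw [Nat.not_even_iff_odd] at ho
    obtain ⟨i, hi⟩ := ho
    have h2 := key (2 * i) j
    have h3 := key (2 * i + 1) j
    have := h i
    omega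

noncomputable def up (m : YoungDiagram) : YoungDiagram := ofRows fun i => m.rowLen (2 * (i / 2))
noncomputable def down (m : YoungDiagram) : YoungDiagram :=
  ofRows fun i => m.rowLen (2 * (i / 2) + 1)

theorem rowLen_up (m : YoungDiagram) (i : ℕ) : (up m).rowLen i = m.rowLen (2 * (i / 2)) := by
  obtain ⟨N, hN⟩ := yd_zero m
  exact rowLen_ofRows (fun i => m.rowLen (2 * (i / 2))) (fun i => m.rowLen_anti _ _ (by omega))
    (2 * N) (hN _ (by omega)) i

theorem rowLen_down (m : YoungDiagram) (i : ℕ) :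
    (down m).rowLen i = m.rowLen (2 * (i / 2) + 1) := by
  obtain ⟨N, hN⟩ := yd_zero m
  exact rowLen_ofRows (fun i => m.rowLen (2 * (i / 2) + 1))
    (fun i => m.rowLen_anti _ _ (by omega)) (2 * N) (hN _ (by omega)) i

theorem card_up_down (m : YoungDiagram) : (up m).card + (down m).card = 2 * m.card := by
  obtain ⟨N, hN⟩ := yd_zero m
  have h0 : m.rowLen (2 * N) = 0 := hN _ (by omega)
  rw [yd_card m (2 * N) h0, yd_card (up m) (2 * N), yd_card (down m) (2 * N)]
  · clear h0 hN
    induction N with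
    | zero => simp
    | succ n ih =>
      rw [show 2 * (n + 1) = 2 * n + 1 + 1 by ring]
      simp only [Finset.sum_range_succ]
      have h1 := rowLen_up m (2 * n)
      have h2 := rowLen_up m (2 * n + 1)
      have h3 := rowLen_down m (2 * n)
      have h4 := rowLen_down m (2 * n + 1)
      rw [show 2 * n / 2 = n by omega] at h1 h3
      rw [show (2 * n + 1) / 2 = n by omega] at h2 h4
      omega
  · rw [rowLen_down]; exact hN _ (by omega)
  · rw [rowLen_up]; exact hN _ (by omega)

theorem up_iff (m l : YoungDiagram) : (EvC l ∧ HS m l) ↔ l = up m := by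
  constructor
  · rintro ⟨he, h⟩
    apply yd_ext
    intro i
    rw [rowLen_up]
    have h1 := h (2 * (i / 2))
    have h2 := he (i / 2)
    rcases Nat.mod_two_eq_zero_or_one i with hi | hi
    · have : i = 2 * (i / 2) := by omega
      rw [← this] at h1 h2 ⊢
      omega
    · have : i = 2 * (i / 2) + 1 := by omega
      rw [← this] at h1 h2
      omega
  · rintro rfl
    constructor
    · intro i
      rw [rowLen_up, rowLen_up]
      congr 1
      omega
    · intro i
      rw [rowLen_up, rowLen_up]
      exact ⟨m.rowLen_anti _ _ (by omega), m.rowLen_anti _ _ (by omega)⟩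

theorem down_iff (m l : YoungDiagram) : (EvC l ∧ HS l m) ↔ l = down m := by
  constructor
  · rintro ⟨he, h⟩
    apply yd_ext
    intro i
    rw [rowLen_down]
    have h1 := h (2 * (i / 2))
    have h3 := h (2 * (i / 2) + 1)
    have h2 := he (i / 2)
    rcases Nat.mod_two_eq_zero_or_one i with hi | hi
    · have : l.rowLen i = l.rowLen (2 * (i / 2)) := by congr 1; omega
      omega
    · have : l.rowLen i = l.rowLen (2 * (i / 2) + 1) := by congr 1; omega
      omega
  · rintro rfl
    constructor
    · intro i
      rw [rowLen_down, rowLen_down]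
      congr 1
      omega
    · intro i
      rw [rowLen_down]
      exact ⟨m.rowLen_anti _ _ (by omega), m.rowLen_anti _ _ (by omega)⟩

theorem up_sum (m : YoungDiagram) (p : ℕ) :
    ∑' l, ind (EvC l) * hs m l p = ∑' l, ind (EvC l) * hs l m p := by
  have h1 : ∀ l, ind (EvC l) * hs m l p = ind (l = up m ∧ l.card = m.card + p) := fun l => by
    rw [hs, ← ind_and, ← and_assoc, up_iff]
  have h2 : ∀ l, ind (EvC l) * hs l m p = ind (l = down m ∧ m.card = l.card + p) := fun l => by
    rw [hs, ← ind_and, ← and_assoc, down_iff]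
  simp only [h1, h2]
  have hc := card_up_down m
  refine tsum_bij _ _ (fun _ => down m) (fun _ => up m) ?_ ?_
  · intro a ha
    obtain ⟨rfl, h⟩ := ind_ne ha
    refine ⟨ind_congr ?_, rfl⟩
    simp only [true_and]
    omega
  · intro a ha
    obtain ⟨rfl, h⟩ := ind_ne ha
    refine ⟨ind_congr ?_, rfl⟩
    simp only [true_and]
    omega

/-- Local rule, forward and backward. -/
noncomputable def fwd (l r m : YoungDiagram) : YoungDiagram := ofRows fun i =>
  max (l.rowLen (i + 1)) (r.rowLen (i + 1)) + min (l.rowLen i) (r.rowLen i) - m.rowLen (i + 1)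

noncomputable def bwd (l r : YoungDiagram) (k : ℕ) (n : YoungDiagram) : YoungDiagram := ofRows fun i =>
  match i with
  | 0 => max (l.rowLen 0) (r.rowLen 0) + k
  | i + 1 => max (l.rowLen (i + 1)) (r.rowLen (i + 1)) + min (l.rowLen i) (r.rowLen i) - n.rowLen i

theorem rowLen_fwd {l r m : YoungDiagram} (hl : HS l m) (hr : HS r m) (i : ℕ) :
    (fwd l r m).rowLen i =
      max (l.rowLen (i + 1)) (r.rowLen (i + 1)) + min (l.rowLen i) (r.rowLen i)
        - m.rowLen (i + 1) := by
  obtain ⟨N, hN⟩ := yd_zero m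
  refine rowLen_ofRows _ ?_ N ?_ i
  · intro i
    have := hl i
    have := hl (i + 1)
    have := hl (i + 1 + 1)
    have := hr i
    have := hr (i + 1)
    have := hr (i + 1 + 1)
    omega
  · have := hN N le_rfl
    have := hN (N + 1) (by omega)
    have := hl N
    have := hr N
    have := hl (N + 1)
    have := hr (N + 1)
    omega

theorem rowLen_bwd {l r n : YoungDiagram} (k : ℕ) (hl : HS n l) (hr : HS n r) :
    (bwd l r k n).rowLen 0 = max (l.rowLen 0) (r.rowLen 0) + k ∧
    ∀ i, (bwd l r k n).rowLen (i + 1) =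
      max (l.rowLen (i + 1)) (r.rowLen (i + 1)) + min (l.rowLen i) (r.rowLen i)
        - n.rowLen i := by
  obtain ⟨N, hN⟩ := yd_zero l
  obtain ⟨N', hN'⟩ := yd_zero r
  have key := rowLen_ofRows (fun i =>
    match i with
    | 0 => max (l.rowLen 0) (r.rowLen 0) + k
    | i + 1 => max (l.rowLen (i + 1)) (r.rowLen (i + 1)) + min (l.rowLen i) (r.rowLen i)
        - n.rowLen i) ?_ (N + N' + 1) ?_
  · exact ⟨key 0, fun i => key (i + 1)⟩
  · intro i
    rcases i with _ | i
    · have := hl 0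
      have := hr 0
      dsimp only
      omega
    · have := hl i
      have := hr i
      have := hl (i + 1)
      have := hr (i + 1)
      dsimp only
      omega
  · have := hN (N + N') (by omega)
    have := hN' (N + N') (by omega)
    have := hN (N + N' + 1) (by omega)
    have := hN' (N + N' + 1) (by omega)
    dsimp only
    omega

theorem card_rule {l r m n : YoungDiagram} (k : ℕ)
    (h0 : m.rowLen 0 = max (l.rowLen 0) (r.rowLen 0) + k)
    (h1 : ∀ i, m.rowLen (i + 1) + n.rowLen i =
      max (l.rowLen (i + 1)) (r.rowLen (i + 1)) + min (l.rowLen i) (r.rowLen i)) :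
    m.card + n.card = l.card + r.card + k := by
  have key : ∀ N, ∑ i ∈ Finset.range (N + 1), m.rowLen i + ∑ i ∈ Finset.range N, n.rowLen i
      + min (l.rowLen N) (r.rowLen N) = ∑ i ∈ Finset.range (N + 1), l.rowLen i +
        ∑ i ∈ Finset.range (N + 1), r.rowLen i + k := by
    intro N
    induction N with
    | zero => simp; omega
    | succ N ih =>
      rw [Finset.sum_range_succ _ (N + 1), Finset.sum_range_succ n.rowLen N,
        Finset.sum_range_succ _ (N + 1), Finset.sum_range_succ _ (N + 1)]
      have := h1 N
      omega
  obtain ⟨N1, hN1⟩ := yd_zero l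
  obtain ⟨N2, hN2⟩ := yd_zero r
  obtain ⟨N3, hN3⟩ := yd_zero m
  obtain ⟨N4, hN4⟩ := yd_zero n
  have := key (N1 + N2 + N3 + N4)
  rw [yd_card l (N1 + N2 + N3 + N4 + 1) (hN1 _ (by omega)),
    yd_card r (N1 + N2 + N3 + N4 + 1) (hN2 _ (by omega)),
    yd_card m (N1 + N2 + N3 + N4 + 1) (hN3 _ (by omega)),
    yd_card n (N1 + N2 + N3 + N4) (hN4 _ (by omega)), ← this,
    hN1 (N1 + N2 + N3 + N4) (by omega)]
  simp

theorem local_rule (l r : YoungDiagram) (m p : ℕ) :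
    ∑' u, hs l u m * hs r u p =
      ∑' k, ind (k ≤ p ∧ k ≤ m) * ∑' n, hs n l (p - k) * hs n r (m - k) := by
  simp only [← ENNReal.tsum_mul_left]
  rw [← ENNReal.tsum_prod (f := fun k n => ind (k ≤ p ∧ k ≤ m) *
    (hs n l (p - k) * hs n r (m - k)))]
  simp only [hs, ← ind_and]
  refine tsum_bij _ _ (fun u => (u.rowLen 0 - max (l.rowLen 0) (r.rowLen 0), fwd l r u))
    (fun x => bwd l r x.1 x.2) ?_ ?_
  · intro u hu
    have hP := ind_ne hu
    rw [ind_true hP]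
    obtain ⟨⟨hl, hlc⟩, hr, hrc⟩ := hP
    have hf := rowLen_fwd hl hr
    have hnl : HS (fwd l r u) l := by
      intro i
      have := hf i
      have := hl i
      have := hl (i + 1)
      have := hr i
      have := hr (i + 1)
      omega
    have hnr : HS (fwd l r u) r := by
      intro i
      have := hf i
      have := hl i
      have := hl (i + 1)
      have := hr i
      have := hr (i + 1)
      omega
    have c := card_rule (l := l) (r := r) (m := u) (n := fwd l r u)
      (u.rowLen 0 - max (l.rowLen 0) (r.rowLen 0))
      (by have := hl 0; have := hr 0; omega)
      (by
        intro i
        have := hf i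
        have := hl i
        have := hl (i + 1)
        have := hr i
        have := hr (i + 1)
        omega)
    have c1 := hnl.card_le
    have c2 := hnr.card_le
    constructor
    · apply ind_true
      dsimp only
      refine ⟨by omega, ⟨hnl, by omega⟩, hnr, by omega⟩
    · apply yd_ext
      obtain ⟨b0, b1⟩ := rowLen_bwd (u.rowLen 0 - max (l.rowLen 0) (r.rowLen 0)) hnl hnr
      rintro (_ | i)
      · have := hl 0
        have := hr 0
        dsimp only
        omega
      · have := b1 i
        have := hf i
        have := hl i
        have := hl (i + 1)
        have := hr i
        have := hr (i + 1)
        dsimp only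
        omega
  · rintro ⟨k, n⟩ hu
    have hP := ind_ne hu
    rw [ind_true hP]
    obtain ⟨hk, ⟨hl, hlc⟩, hr, hrc⟩ := hP
    dsimp only at *
    obtain ⟨b0, b1⟩ := rowLen_bwd k hl hr
    have hnl : HS l (bwd l r k n) := by
      rintro (_ | i)
      · have := b1 0
        have := hl 0
        have := hr 0
        omega
      · have := b1 i
        have := b1 (i + 1)
        have := hl i
        have := hl (i + 1)
        have := hr i
        have := hr (i + 1)
        omega
    have hnr : HS r (bwd l r k n) := by
      rintro (_ | i)
      · have := b1 0
        have := hl 0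
        have := hr 0
        omega
      · have := b1 i
        have := b1 (i + 1)
        have := hl i
        have := hl (i + 1)
        have := hr i
        have := hr (i + 1)
        omega
    have c := card_rule (l := l) (r := r) (m := bwd l r k n) (n := n) k b0 (by
        intro i
        have := b1 i
        have := hl i
        have := hr i
        omega)
    constructor
    · apply ind_true
      refine ⟨⟨hnl, by omega⟩, hnr, by omega⟩
    · refine Prod.ext ?_ ?_
      · dsimp only
        omega
      · apply yd_ext
        intro i
        dsimp only
        have := rowLen_fwd hnl hnr i
        have := b1 i
        have := hl i
        have := hr i
        omega

/-- Weighted number of chains of horizontal strips. -/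
noncomputable def chA : List ℕ → YoungDiagram → ℝ≥0∞
  | [], l => ind (l = ⊥)
  | p :: d, l => ∑' m, hs m l p * chA d m

noncomputable def chW : List ℕ → ℕ → (List ℕ → ℝ≥0∞) → ℝ≥0∞
  | [], m, F => ind (m = 0) * F []
  | p :: d, m, F => ∑' k, ind (k ≤ p ∧ k ≤ m) * chW d (m - k) (fun d' => F ((p - k) :: d'))

theorem chW_congr (d : List ℕ) (m : ℕ) (F G : List ℕ → ℝ≥0∞)
    (h : ∀ d', d'.length = d.length → F d' = G d') : chW d m F = chW d m G := by
  induction d generalizing m F G with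
  | nil => rw [chW, chW, h _ rfl]
  | cons p d ih =>
    rw [chW, chW]
    congr 1
    ext k
    congr 1
    apply ih
    intro d' hd'
    apply h
    simp [hd']

theorem chW_tsum {α : Type*} (d : List ℕ) (m : ℕ) (F : α → List ℕ → ℝ≥0∞) :
    chW d m (fun d' => ∑' x, F x d') = ∑' x, chW d m (F x) := by
  induction d generalizing m F with
  | nil => simp only [chW, ENNReal.tsum_mul_left]
  | cons p d ih =>
    simp only [chW, ih, ← ENNReal.tsum_mul_left]
    rw [ENNReal.tsum_comm]

theorem chW_mul (c : ℝ≥0∞) (d : List ℕ) (m : ℕ) (F : List ℕ → ℝ≥0∞) :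
    chW d m (fun d' => c * F d') = c * chW d m F := by
  induction d generalizing m F with
  | nil => simp only [chW]; ring
  | cons p d ih =>
    simp only [chW, ih, ← ENNReal.tsum_mul_left]
    congr 1
    ext k
    ring

theorem HS_bot {u : YoungDiagram} (h : HS u ⊥) : u = ⊥ := by
  apply yd_ext
  intro i
  have h1 := (h i).1
  have : (⊥ : YoungDiagram).rowLen i = 0 := by
    by_contra hh
    exact YoungDiagram.notMem_bot (i, 0)
      (YoungDiagram.mem_iff_lt_rowLen.2 (Nat.pos_of_ne_zero hh))
  omega

theorem HS_refl_bot : HS ⊥ ⊥ := fun i =>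
  ⟨le_rfl, (⊥ : YoungDiagram).rowLen_anti _ _ (by omega)⟩

theorem pieri (d : List ℕ) (l : YoungDiagram) (m : ℕ) :
    ∑' u, hs l u m * chA d u = chW d m (fun d' => chA d' l) := by
  induction d generalizing l m with
  | nil =>
    simp only [chA, chW, hs, ← ind_and]
    rw [tsum_eq_single ⊥]
    · apply ind_congr
      constructor
      · rintro ⟨⟨h, hc⟩, -⟩
        have := HS_bot h
        subst this
        exact ⟨by omega, rfl⟩
      · rintro ⟨rfl, rfl⟩
        exact ⟨⟨HS_refl_bot, rfl⟩, rfl⟩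
    · intro b hb
      exact ind_false fun h => hb h.2
  | cons p d ih =>
    simp only [chA, chW, chW_tsum, chW_mul, ← ih]
    simp only [← ENNReal.tsum_mul_left]
    rw [ENNReal.tsum_comm]
    have : ∀ r, ∑' u, hs l u m * (hs r u p * chA d r) =
        ∑' k, ∑' n, ind (k ≤ p ∧ k ≤ m) * (hs n l (p - k) * (hs n r (m - k) * chA d r)) := by
      intro r
      simp only [← mul_assoc]
      simp only [ENNReal.tsum_mul_right]
      rw [local_rule]
      simp only [← ENNReal.tsum_mul_left, ← ENNReal.tsum_mul_right, mul_assoc]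
    simp only [this]
    rw [ENNReal.tsum_comm]
    congr 1
    ext k
    rw [ENNReal.tsum_comm]

noncomputable def chC : List ℕ → ℝ≥0∞
  | [] => 1
  | p :: d => chW d p (fun d' => if d'.length = d.length then chC d' else 0)
termination_by d => d.length
decreasing_by simp_all

theorem chC_cons (p : ℕ) (d : List ℕ) : chC (p :: d) = chW d p chC := by
  rw [chC]
  apply chW_congr
  intro d' h
  simp [h]

theorem evC_bot : EvC ⊥ := by
  rw [← evC_iff]
  intro j
  have : (⊥ : YoungDiagram).colLen j = 0 := by
    by_contra hh
    exact YoungDiagram.notMem_bot (0, j)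
      (YoungDiagram.mem_iff_lt_colLen.2 (Nat.pos_of_ne_zero hh))
  simp [this]

theorem main_list (n : ℕ) : ∀ d : List ℕ, d.length = n → ∑' l, ind (EvC l) * chA d l = chC d := by
  induction n with
  | zero =>
    intro d hd
    obtain rfl := List.length_eq_zero_iff.1 hd
    simp only [chA, chC]
    rw [tsum_eq_single ⊥]
    · rw [ind_true evC_bot, ind_true rfl, one_mul]
    · intro b hb
      rw [ind_false hb, mul_zero]
  | succ n ih =>
    intro d hd
    rcases d with _ | ⟨p, d⟩
    · simp at hd
    rw [chC_cons]
    have hd' : d.length = n := by simpa using hd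
    rw [chW_congr d p chC (fun d' => ∑' l, ind (EvC l) * chA d' l)
      (fun d' h => (ih d' (by omega)).symm), chW_tsum]
    simp only [chW_mul, ← pieri, chA, ← ENNReal.tsum_mul_left, ← mul_assoc]
    rw [ENNReal.tsum_comm, ENNReal.tsum_comm (f := fun a b => ind (EvC a) * hs a b p * chA d b)]
    simp only [ENNReal.tsum_mul_right, up_sum]

def Lst (f : ℕ → ℕ) : ℕ → List ℕ
  | 0 => []
  | n + 1 => f n :: Lst f n

theorem length_Lst (f : ℕ → ℕ) (n : ℕ) : (Lst f n).length = n := by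
  induction n with
  | zero => rfl
  | succ n ih => simp [Lst, ih]

theorem Lst_congr {f g : ℕ → ℕ} {n : ℕ} (h : ∀ k < n, f k = g k) : Lst f n = Lst g n := by
  induction n with
  | zero => rfl
  | succ n ih =>
    rw [Lst, Lst, h n (by omega), ih fun k hk => h k (by omega)]

theorem HS_iff (m l : YoungDiagram) : HS m l ↔
    (∀ i j, (i, j) ∈ m → (i, j) ∈ l) ∧ ∀ i j, (i + 1, j) ∈ l → (i, j) ∈ m := by
  simp only [YoungDiagram.mem_iff_lt_rowLen]
  constructor
  · intro h
    refine ⟨fun i j hj => lt_of_lt_of_le hj (h i).1, fun i j hj => lt_of_lt_of_le hj (h i).2⟩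
  · rintro ⟨h1, h2⟩ i
    constructor
    · by_contra h
      have := h1 i (l.rowLen i) (by omega)
      omega
    · by_contra h
      have := h2 i (m.rowLen i) (by omega)
      omega

def content {l : YoungDiagram} (T : SemistandardYoungTableau l) (k : ℕ) : ℕ :=
  (l.cells.filter (fun c => T c.1 c.2 = k)).card

def Good (f : ℕ → ℕ) (n : ℕ) {l : YoungDiagram} (T : SemistandardYoungTableau l) : Prop :=
  (∀ i j, (i, j) ∈ l → T i j < n) ∧ ∀ k < n, f k = content T k

theorem T_mono {l : YoungDiagram} (T : SemistandardYoungTableau l) {a b a' b' : ℕ}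
    (h1 : a' ≤ a) (h2 : b' ≤ b) (h : (a, b) ∈ l) : T a' b' ≤ T a b :=
  (T.col_weak h1 (l.up_left_mem le_rfl h2 h)).trans (T.row_weak_of_le h2 h)

/-- The part of the shape with entries less than `n`. -/
def cut {l : YoungDiagram} (T : SemistandardYoungTableau l) (n : ℕ) : YoungDiagram where
  cells := l.cells.filter (fun c => T c.1 c.2 < n)
  isLowerSet := by
    rintro ⟨a, b⟩ ⟨a', b'⟩ hle h
    obtain ⟨h3, h4⟩ := Prod.mk_le_mk.1 hle
    simp only [Finset.coe_filter, Set.mem_ofPred_eq, YoungDiagram.mem_cells] at h ⊢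
    exact ⟨l.up_left_mem h3 h4 h.1, lt_of_le_of_lt (T_mono T h3 h4 h.1) h.2⟩

theorem mem_cut {l : YoungDiagram} (T : SemistandardYoungTableau l) (n i j : ℕ) :
    (i, j) ∈ cut T n ↔ (i, j) ∈ l ∧ T i j < n := by
  rw [← YoungDiagram.mem_cells]
  simp [cut]

def cutT {l : YoungDiagram} (T : SemistandardYoungTableau l) (n : ℕ) :
    SemistandardYoungTableau (cut T n) where
  entry i j := if (i, j) ∈ cut T n then T i j else 0
  row_weak' := by
    intro i j1 j2 h hm
    rw [if_pos hm, if_pos ((cut T n).up_left_mem le_rfl h.le hm)]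
    exact T.row_weak h ((mem_cut _ _ _ _).1 hm).1
  col_strict' := by
    intro i1 i2 j h hm
    rw [if_pos hm, if_pos ((cut T n).up_left_mem h.le le_rfl hm)]
    exact T.col_strict h ((mem_cut _ _ _ _).1 hm).1
  zeros' := by
    intro i j h
    rw [if_neg h]

theorem cutT_apply {l : YoungDiagram} (T : SemistandardYoungTableau l) (n i j : ℕ) :
    cutT T n i j = if (i, j) ∈ cut T n then T i j else 0 := rfl

def extT (n : ℕ) {m l : YoungDiagram} (T : SemistandardYoungTableau m) (h : HS m l)
    (hT : ∀ i j, (i, j) ∈ m → T i j < n) : SemistandardYoungTableau l where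
  entry i j := if (i, j) ∈ m then T i j else if (i, j) ∈ l then n else 0
  row_weak' := by
    intro i j1 j2 hj hm
    by_cases h2 : (i, j2) ∈ m
    · rw [if_pos h2, if_pos (m.up_left_mem le_rfl hj.le h2)]
      exact T.row_weak hj h2
    · rw [if_neg h2, if_pos hm]
      split_ifs with h3
      · exact (hT _ _ h3).le
      · exact le_rfl
      · omega
  col_strict' := by
    intro i1 i2 j hi hm
    by_cases h2 : (i2, j) ∈ m
    · rw [if_pos h2, if_pos (m.up_left_mem hi.le le_rfl h2)]
      exact T.col_strict hi h2
    · rw [if_neg h2, if_pos hm]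
      have h3 : (i1, j) ∈ m :=
        ((HS_iff _ _).1 h).2 i1 j (l.up_left_mem (by omega) le_rfl hm)
      rw [if_pos h3]
      exact hT _ _ h3
  zeros' := by
    intro i j hm
    rw [if_neg (fun h' => hm (((HS_iff _ _).1 h).1 _ _ h')), if_neg hm]

theorem extT_apply (n : ℕ) {m l : YoungDiagram} (T : SemistandardYoungTableau m) (h : HS m l)
    (hT : ∀ i j, (i, j) ∈ m → T i j < n) (i j : ℕ) :
    extT n T h hT i j = if (i, j) ∈ m then T i j else if (i, j) ∈ l then n else 0 := rfl

theorem sig_ext {a b : YoungDiagram} (T : SemistandardYoungTableau a)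
    (U : SemistandardYoungTableau b) (h : a = b) (h2 : ∀ i j, T i j = U i j) :
    (⟨a, T⟩ : Σ l : YoungDiagram, SemistandardYoungTableau l) = ⟨b, U⟩ := by
  subst h
  congr 1
  ext i j
  exact h2 i j

theorem mem_iff_cut {l : YoungDiagram} (T : SemistandardYoungTableau l) (n : ℕ)
    (hT : ∀ i j, (i, j) ∈ l → T i j < n + 1) : HS (cut T n) l ∧
      l.card = (cut T n).card + content T n := by
  constructor
  · rw [HS_iff]
    constructor
    · intro i j h
      exact ((mem_cut _ _ _ _).1 h).1
    · intro i j h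
      rw [mem_cut]
      refine ⟨l.up_left_mem (by omega) le_rfl h, ?_⟩
      have := T.col_strict (show i < i + 1 by omega) h
      have := hT _ _ h
      omega
  · rw [YoungDiagram.card, YoungDiagram.card, content,
      ← Finset.card_filter_add_card_filter_not (s := l.cells) (fun c => T c.1 c.2 < n)]
    congr 2
    apply Finset.filter_congr
    rintro ⟨i, j⟩ h
    have := hT i j (by simpa using h)
    dsimp only
    omega

theorem content_cut {l : YoungDiagram} (T : SemistandardYoungTableau l) (n k : ℕ) (hk : k < n) :
    content (cutT T n) k = content T k := by
  rw [content, content]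
  congr 1
  ext ⟨i, j⟩
  simp only [Finset.mem_filter, YoungDiagram.mem_cells, cutT_apply, mem_cut]
  constructor
  · rintro ⟨h1, h2⟩
    rw [if_pos h1] at h2
    exact ⟨h1.1, h2⟩
  · rintro ⟨h1, h2⟩
    have : (i, j) ∈ l ∧ T i j < n := ⟨h1, by omega⟩
    rw [if_pos this]
    exact ⟨this, h2⟩

theorem cut_ext (n : ℕ) {m l : YoungDiagram} (T : SemistandardYoungTableau m) (h : HS m l)
    (hT : ∀ i j, (i, j) ∈ m → T i j < n) : cut (extT n T h hT) n = m := by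
  ext ⟨i, j⟩
  rw [YoungDiagram.mem_cells, YoungDiagram.mem_cells, mem_cut, extT_apply]
  constructor
  · rintro ⟨h1, h2⟩
    by_contra hm
    rw [if_neg hm, if_pos h1] at h2
    omega
  · intro hm
    rw [if_pos hm]
    exact ⟨((HS_iff _ _).1 h).1 _ _ hm, hT _ _ hm⟩

theorem cutT_ext (n : ℕ) {m l : YoungDiagram} (T : SemistandardYoungTableau m) (h : HS m l)
    (hT : ∀ i j, (i, j) ∈ m → T i j < n) :
    (⟨cut (extT n T h hT) n, cutT (extT n T h hT) n⟩ :
      Σ l : YoungDiagram, SemistandardYoungTableau l) = ⟨m, T⟩ := by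
  refine sig_ext _ _ (cut_ext n T h hT) ?_
  intro i j
  rw [cutT_apply, cut_ext, extT_apply]
  by_cases hm : (i, j) ∈ m
  · rw [if_pos hm, if_pos hm]
  · rw [if_neg hm, T.zeros hm]

theorem chA_eq (f : ℕ → ℕ) (n : ℕ) (l : YoungDiagram) :
    chA (Lst f n) l = ∑' T : SemistandardYoungTableau l, ind (Good f n T) := by
  induction n generalizing l with
  | zero =>
    rw [Lst, chA]
    by_cases h : l = ⊥
    · subst h
      rw [tsum_eq_single (SemistandardYoungTableau.highestWeight ⊥), ind_true rfl, ind_true]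
      · refine ⟨fun i j h => absurd h (YoungDiagram.notMem_bot _), fun k hk => by omega⟩
      · intro T hT
        exfalso
        apply hT
        ext i j
        rw [SemistandardYoungTableau.zeros _ (YoungDiagram.notMem_bot _),
          SemistandardYoungTableau.zeros _ (YoungDiagram.notMem_bot _)]
    · rw [ind_false h]
      symm
      rw [ENNReal.tsum_eq_zero]
      intro T
      apply ind_false
      rintro ⟨h1, -⟩
      apply h
      ext ⟨i, j⟩
      rw [YoungDiagram.mem_cells]
      constructor
      · intro h2
        have := h1 i j h2
        omega
      · intro h2
        simp at h2
  | succ n ih =>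
    rw [Lst, chA]
    simp only [ih, ← ENNReal.tsum_mul_left]
    rw [← ENNReal.tsum_sigma' (fun x : (Σ m : YoungDiagram, SemistandardYoungTableau m) =>
      hs x.1 l (f n) * ind (Good f n x.2))]
    simp only [hs, ← ind_and]
    symm
    classical
    refine tsum_bij _ _ (fun T => ⟨cut T n, cutT T n⟩)
      (fun x => if h : HS x.1 l ∧ ∀ i j, (i, j) ∈ x.1 → x.2 i j < n then extT n x.2 h.1 h.2
        else SemistandardYoungTableau.highestWeight l) ?_ ?_
    · intro T hT
      have hP := ind_ne hT
      rw [ind_true hP]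
      obtain ⟨h1, h2⟩ := hP
      obtain ⟨h3, h4⟩ := mem_iff_cut T n h1
      have h5 : ∀ i j, (i, j) ∈ cut T n → cutT T n i j < n := by
        intro i j h
        rw [cutT_apply, if_pos h]
        exact ((mem_cut _ _ _ _).1 h).2
      constructor
      · apply ind_true
        dsimp only
        refine ⟨⟨h3, ?_⟩, h5, ?_⟩
        · rw [h4, h2 n (by omega)]
        · intro k hk
          rw [content_cut T n k hk]
          exact h2 k (by omega)
      · dsimp only
        rw [dif_pos ⟨h3, h5⟩]
        ext i j
        rw [extT_apply, cutT_apply]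
        by_cases h6 : (i, j) ∈ cut T n
        · rw [if_pos h6, if_pos h6]
        · rw [if_neg h6]
          by_cases h7 : (i, j) ∈ l
          · rw [if_pos h7]
            rw [mem_cut] at h6
            have := h1 i j h7
            have : ¬ T i j < n := fun h => h6 ⟨h7, h⟩
            omega
          · rw [if_neg h7, T.zeros h7]
    · rintro ⟨m, T⟩ hT
      have hP := ind_ne hT
      rw [ind_true hP]
      obtain ⟨⟨h1, h2⟩, h3, h4⟩ := hP
      dsimp only at *
      rw [dif_pos ⟨h1, h3⟩]
      have key := cutT_ext n T h1 h3
      refine ⟨ind_true ?_, key⟩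
      have h5 : ∀ i j, (i, j) ∈ l → extT n T h1 h3 i j < n + 1 := by
        intro i j h
        rw [extT_apply]
        split_ifs with h6
        · have := h3 i j h6
          omega
        · omega
      refine ⟨h5, ?_⟩
      intro k hk
      rcases Nat.lt_succ_iff_lt_or_eq.1 hk with hk | rfl
      · rw [← content_cut _ n k hk, h4 k hk]
        exact (congrArg (fun x : (Σ m : YoungDiagram, SemistandardYoungTableau m) =>
          content x.2 k) key).symm
      · have h6 := (mem_iff_cut _ k h5).2
        rw [cut_ext] at h6
        omega

theorem chW_eq (f : ℕ → ℕ) (n m : ℕ) (F : List ℕ → ℝ≥0∞) :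
    chW (Lst f n) m F = ∑' e : ℕ →₀ ℕ,
      ind ((∀ k, n ≤ k → e k = 0) ∧ (∀ k < n, e k ≤ f k) ∧ ∑ k ∈ Finset.range n, e k = m) *
        F (Lst (fun k => f k - e k) n) := by
  induction n generalizing m F with
  | zero =>
    rw [Lst, chW, tsum_eq_single 0]
    · congr 1
      apply ind_congr
      simp [eq_comm]
    · intro e he
      rw [ind_false, zero_mul]
      rintro ⟨h, -⟩
      apply he
      ext k
      exact h k (by omega)
  | succ n ih =>
    rw [Lst, chW]
    simp only [ih, ← ENNReal.tsum_mul_left, ← mul_assoc, ← ind_and]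
    rw [← ENNReal.tsum_prod (f := fun (k : ℕ) (e : ℕ →₀ ℕ) =>
      ind ((k ≤ f n ∧ k ≤ m) ∧ (∀ k, n ≤ k → e k = 0) ∧ (∀ k < n, e k ≤ f k) ∧
        ∑ k ∈ Finset.range n, e k = m - k) * F ((f n - k) :: Lst (fun k => f k - e k) n))]
    refine tsum_bij _ _ (fun x => x.2.update n x.1) (fun e => (e n, e.erase n)) ?_ ?_
    · rintro ⟨k, e⟩ hx
      have hP := ind_ne (left_ne_zero_of_mul hx)
      rw [ind_true hP]
      obtain ⟨⟨h1, h2⟩, h3, h4, h5⟩ := hP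
      dsimp only at *
      have hu : ∀ j, j ≠ n → (e.update n k) j = e j := fun j hj => by
        simp [Finsupp.update_apply, hj]
      have hn : (e.update n k) n = k := by simp
      constructor
      · rw [ind_true]
        · congr 2
          rw [Lst, hn]
          congr 1
          apply Lst_congr
          intro j hj
          rw [hu j (by omega)]
        · refine ⟨fun j hj => ?_, fun j hj => ?_, ?_⟩
          · rw [hu j (by omega)]
            exact h3 j (by omega)
          · by_cases hjn : j = n
            · subst hjn
              rw [hn]
              exact h1
            · rw [hu j hjn]
              exact h4 j (by omega)
          · rw [Finset.sum_range_succ, hn, Finset.sum_congr rfl fun j hj =>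
              hu j (by have := Finset.mem_range.1 hj; omega), h5]
            omega
      · refine Prod.ext hn ?_
        ext j
        by_cases hjn : j = n
        · subst hjn
          simp [h3]
        · simp [Finsupp.erase_apply, hjn, hu]
    · intro e hx
      have hP := ind_ne (left_ne_zero_of_mul hx)
      rw [ind_true hP]
      obtain ⟨h3, h4, h5⟩ := hP
      dsimp only at *
      have hu : ∀ j, j ≠ n → (e.erase n) j = e j := fun j hj => by
        simp [Finsupp.erase_apply, hj]
      rw [Finset.sum_range_succ] at h5
      constructor
      · rw [ind_true]
        · congr 2
          rw [Lst]
          congr 1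
          apply Lst_congr
          intro j hj
          rw [hu j (by omega)]
        · refine ⟨⟨h4 n (by omega), by omega⟩, fun j hj => ?_, fun j hj => ?_, ?_⟩
          · by_cases hjn : j = n
            · subst hjn
              simp
            · rw [hu j hjn]
              exact h3 j (by omega)
          · rw [hu j (by omega)]
            exact h4 j (by omega)
          · rw [Finset.sum_congr rfl fun j hj =>
              hu j (by have := Finset.mem_range.1 hj; omega)]
            exact Nat.eq_sub_of_add_eq h5
      · ext j
        by_cases hjn : j = n
        · subst hjn
          simp
        · simp [Finsupp.update_apply, hjn, hu]

/-- Degree of the multigraph `c` at the vertex `k`. -/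
def deg (c : (ℕ × ℕ) →₀ ℕ) (k : ℕ) : ℕ :=
  ∑ p ∈ c.support, c p * ((if p.1 = k then 1 else 0) + (if p.2 = k then 1 else 0))

theorem deg_add (c c' : (ℕ × ℕ) →₀ ℕ) (k : ℕ) : deg (c + c') k = deg c k + deg c' k := by
  exact Finsupp.sum_add_index' (f := c) (g := c')
    (h := fun p a => a * ((if p.1 = k then 1 else 0) + (if p.2 = k then 1 else 0)))
    (by simp) (by intros; ring)

def col (n : ℕ) : ℕ ↪ ℕ × ℕ := ⟨fun i => (i, n), fun a b h => congrArg Prod.fst h⟩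

theorem deg_col (n : ℕ) (e : ℕ →₀ ℕ) (he : ∀ k, n ≤ k → e k = 0) :
    (∀ k < n, deg (e.embDomain (col n)) k = e k) ∧
      deg (e.embDomain (col n)) n = ∑ k ∈ Finset.range n, e k := by
  have h0 : ∀ k, deg (e.embDomain (col n)) k =
      ∑ i ∈ Finset.range n, e i * ((if i = k then 1 else 0) + (if n = k then 1 else 0)) := by
    intro k
    rw [deg, Finsupp.support_embDomain, Finset.sum_map]
    simp only [Finsupp.embDomain_apply_self]
    simp only [col, Function.Embedding.coeFn_mk]
    apply Finset.sum_subset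
    · intro i hi
      rw [Finset.mem_range]
      by_contra h
      exact Finsupp.mem_support_iff.1 hi (he i (by omega))
    · intro i _ hi
      rw [Finsupp.notMem_support_iff.1 hi, zero_mul]
  constructor
  · intro k hk
    rw [h0, Finset.sum_eq_single k]
    · simp [hk.ne']
    · intro i _ hi
      simp [hk.ne', hi]
    · intro h
      exact absurd (Finset.mem_range.2 hk) h
  · rw [h0]
    apply Finset.sum_congr rfl
    intro i hi
    have := Finset.mem_range.1 hi
    simp [this.ne]

def GoodC (f : ℕ → ℕ) (n : ℕ) (c : (ℕ × ℕ) →₀ ℕ) : Prop :=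
  (∀ i j, c (i, j) ≠ 0 → i < j ∧ j < n) ∧ ∀ k < n, f k = deg c k

theorem col_apply (n : ℕ) (e : ℕ →₀ ℕ) (i j : ℕ) :
    e.embDomain (col n) (i, j) = if j = n then e i else 0 := by
  split_ifs with h
  · subst h
    exact Finsupp.embDomain_apply_self (col j) e i
  · apply Finsupp.embDomain_of_notMem_range
    rintro ⟨a, ha⟩
    exact h (congrArg Prod.snd ha).symm

theorem deg_zero (c : (ℕ × ℕ) →₀ ℕ) (n : ℕ) (h : ∀ i j, c (i, j) ≠ 0 → i < j ∧ j < n) :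
    deg c n = 0 := by
  apply Finset.sum_eq_zero
  rintro ⟨i, j⟩ hp
  have := h i j (Finsupp.mem_support_iff.1 hp)
  simp [show i ≠ n by omega, show j ≠ n by omega]

theorem chC_eq (f : ℕ → ℕ) (n : ℕ) :
    chC (Lst f n) = ∑' c : (ℕ × ℕ) →₀ ℕ, ind (GoodC f n c) := by
  induction n generalizing f with
  | zero =>
    rw [Lst, chC, tsum_eq_single 0]
    · rw [ind_true]
      exact ⟨fun i j h => absurd rfl h, fun k hk => by omega⟩
    · intro c hc
      apply ind_false
      rintro ⟨h, -⟩
      apply hc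
      ext ⟨i, j⟩
      by_contra h1
      have := h i j h1
      omega
  | succ n ih =>
    rw [Lst, chC_cons, chW_eq]
    simp only [ih, ← ENNReal.tsum_mul_left, ← ind_and]
    rw [← ENNReal.tsum_prod (f := fun (e : ℕ →₀ ℕ) (c : (ℕ × ℕ) →₀ ℕ) =>
      ind (((∀ k, n ≤ k → e k = 0) ∧ (∀ k < n, e k ≤ f k) ∧
        ∑ k ∈ Finset.range n, e k = f n) ∧ GoodC (fun k => f k - e k) n c))]
    refine tsum_bij _ _ (fun x => x.2 + x.1.embDomain (col n))
      (fun c => (c.comapDomain (col n) (col n).injective.injOn,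
        c.filter (fun p => p.2 ≠ n))) ?_ ?_
    · rintro ⟨e, c⟩ hx
      have hP := ind_ne hx
      rw [ind_true hP]
      obtain ⟨⟨h1, h2, h3⟩, h4, h5⟩ := hP
      dsimp only at *
      have hc : ∀ i, c (i, n) = 0 := by
        intro i
        by_contra h
        have := h4 i n h
        omega
      obtain ⟨d1, d2⟩ := deg_col n e h1
      constructor
      · apply ind_true
        constructor
        · intro i j h
          rw [Finsupp.add_apply, col_apply] at h
          by_cases hj : j = n
          · subst hj
            rw [hc, if_pos rfl, zero_add] at h
            refine ⟨?_, by omega⟩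
            by_contra hi
            exact h (h1 i (by omega))
          · rw [if_neg hj, add_zero] at h
            have := h4 i j h
            omega
        · intro k hk
          rw [deg_add]
          rcases Nat.lt_succ_iff_lt_or_eq.1 hk with hk | rfl
          · rw [d1 k hk, ← h5 k hk]
            have := h2 k hk
            omega
          · rw [d2, deg_zero c k h4, h3, zero_add]
      · refine Prod.ext ?_ ?_
        · ext i
          rw [Finsupp.comapDomain_apply]
          change (c + e.embDomain (col n)) (i, n) = e i
          rw [Finsupp.add_apply, col_apply, hc, if_pos rfl, zero_add]
        · ext ⟨i, j⟩
          rw [Finsupp.filter_apply, Finsupp.add_apply, col_apply]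
          by_cases hj : j = n
          · subst hj
            simp [hc]
          · simp [hj]
    · intro c hx
      have hP := ind_ne hx
      rw [ind_true hP]
      obtain ⟨h1, h2⟩ := hP
      dsimp only at *
      set e := c.comapDomain (col n) (col n).injective.injOn with he
      set c' := c.filter (fun p => p.2 ≠ n) with hc'
      have he' : ∀ i, e i = c (i, n) := fun i => rfl
      have hc'' : ∀ i j, c' (i, j) = if j = n then 0 else c (i, j) := by
        intro i j
        rw [hc', Finsupp.filter_apply]
        by_cases hj : j = n <;> simp [hj]
      have hsum : c' + e.embDomain (col n) = c := by
        ext ⟨i, j⟩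
        rw [Finsupp.add_apply, col_apply, hc'', he']
        by_cases hj : j = n
        · subst hj
          simp
        · simp [hj]
      refine ⟨ind_true ?_, hsum⟩
      have e0 : ∀ k, n ≤ k → e k = 0 := by
        intro k hk
        rw [he']
        by_contra h
        have := h1 k n h
        omega
      have g : ∀ i j, c' (i, j) ≠ 0 → i < j ∧ j < n := by
        intro i j h
        rw [hc''] at h
        by_cases hj : j = n
        · simp [hj] at h
        · rw [if_neg hj] at h
          have := h1 i j h
          omega
      obtain ⟨d1, d2⟩ := deg_col n e e0
      have hd : ∀ k, deg c k = deg c' k + deg (e.embDomain (col n)) k := fun k => by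
        rw [← deg_add, hsum]
      refine ⟨⟨e0, ?_, ?_⟩, g, ?_⟩
      · intro k hk
        rw [h2 k (by omega), hd, d1 k hk]
        omega
      · rw [h2 n (by omega), hd, d2, deg_zero c' n g, zero_add]
      · intro k hk
        change f k - e k = deg c' k
        rw [h2 k (by omega), hd, d1 k hk]
        omega

theorem natCard_eq_of_ind {α β : Type} (P : α → Prop) (Q : β → Prop)
    (h : ∑' a, ind (P a) = ∑' b, ind (Q b)) : Nat.card {a // P a} = Nat.card {b // Q b} := by
  have key : ∀ {γ : Type} (R : γ → Prop), ∑' a, ind (R a) = (ENat.card {a // R a} : ℝ≥0∞) := by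
    intro γ R
    rw [← ENNReal.tsum_one]
    symm
    refine (tsum_subtype {a | R a} (fun _ => (1 : ℝ≥0∞))).trans ?_
    congr 1
  rw [key, key] at h
  have h' : ENat.card {a // P a} = ENat.card {b // Q b} := by exact_mod_cast h
  rw [Nat.card, Nat.card]
  exact congrArg ENat.toNat h'


/-- Littlewood's identity `Σ_{λ' even} s_λ(x) = Π_{i<j} (1 − x_i x_j)^{−1}` in infinitely
many variables `x_0, x_1, …`, stated coefficient-wise: for each monomial exponent
`d : ℕ →₀ ℕ`, the number of pairs `(λ, T)` of a Young diagram `λ` all of whose column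
lengths are even together with a semistandard Young tableau `T` of shape `λ` whose
content is `d` (this counts the coefficient of `x^d` in `Σ_{λ' even} s_λ`, by the
combinatorial definition of the Schur function) equals the number of finitely supported
multiplicity functions `c` on pairs `i < j` with `Σ c(i,j)·(e_i + e_j) = d` (the
coefficient of `x^d` in `Π_{i<j} (1 − x_i x_j)^{−1}`). -/
theorem littlewood_identity (d : ℕ →₀ ℕ) :
    Nat.card {p : Σ lam : YoungDiagram, SemistandardYoungTableau lam //
        (∀ j, Even (p.1.colLen j)) ∧
        ∀ k, d k = (p.1.cells.filter (fun c => p.2 c.1 c.2 = k)).card}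
      = Nat.card {c : (ℕ × ℕ) →₀ ℕ //
        (∀ p ∈ c.support, p.1 < p.2) ∧
        ∀ k, d k = ∑ p ∈ c.support,
          c p * ((if p.1 = k then 1 else 0) + (if p.2 = k then 1 else 0))} := by
  apply natCard_eq_of_ind
  obtain ⟨n, hn⟩ : ∃ n, ∀ k, n ≤ k → d k = 0 := by
    refine ⟨d.support.sup id + 1, fun k hk => ?_⟩
    by_contra h
    have := Finset.le_sup (f := id) (Finsupp.mem_support_iff.2 h)
    simp only [id] at this
    omega
  have h1 := main_list n (Lst d n) (length_Lst d n)
  rw [chC_eq] at h1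
  simp only [chA_eq, ← ENNReal.tsum_mul_left, ← ind_and] at h1
  rw [← ENNReal.tsum_sigma' (fun x : (Σ m : YoungDiagram, SemistandardYoungTableau m) =>
      ind (EvC x.1 ∧ Good d n x.2))] at h1
  refine Eq.trans ?_ (h1.trans ?_)
  · congr 1
    ext ⟨l, T⟩
    apply ind_congr
    rw [evC_iff]
    apply and_congr_right
    intro _
    dsimp only
    constructor
    · intro h
      refine ⟨?_, fun k _ => h k⟩
      intro i j hij
      by_contra hlt
      have h2 := h (T i j)
      rw [hn _ (by omega)] at h2
      have h3 := Finset.card_eq_zero.1 h2.symm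
      have h4 : (i, j) ∈ l.cells.filter (fun c => T c.1 c.2 = T i j) := by
        simpa using hij
      rw [h3] at h4
      simp at h4
    · rintro ⟨h, h2⟩ k
      by_cases hk : k < n
      · exact h2 k hk
      · rw [hn k (by omega)]
        symm
        rw [Finset.card_eq_zero, Finset.filter_eq_empty_iff]
        rintro ⟨i, j⟩ hij
        have := h i j (by simpa using hij)
        dsimp only
        omega
  · congr 1
    ext c
    apply ind_congr
    constructor
    · rintro ⟨h, h2⟩
      refine ⟨fun p hp => (h p.1 p.2 (Finsupp.mem_support_iff.1 hp)).1, fun k => ?_⟩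
      by_cases hk : k < n
      · exact h2 k hk
      · rw [hn k (by omega)]
        symm
        exact deg_zero c k fun i j hij => by
          have := h i j hij
          omega
    · rintro ⟨h, h2⟩
      refine ⟨?_, fun k _ => h2 k⟩
      intro i j hij
      have hs := Finsupp.mem_support_iff.2 hij
      refine ⟨h _ hs, ?_⟩
      by_contra hj
      have h3 := h2 j
      rw [hn j (by omega)] at h3
      have h4 := (Finset.sum_eq_zero_iff.1 h3.symm) (i, j) hs
      simp [hij] at h4
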